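/- Let n ≥ 2 be an even natural number and let F be an n×n integer matrix whose characteristic polynomial equals X^n − X + 1. Then there is no n×n integer matrix G with det G = −1 such that F·G = G·F. -/

import Mathlib

open Polynomial

/-!
A real endomorphism without real eigenvalues lives on an even-dimensional space, since an odd-degree
real polynomial has a root. If `f` has no real eigenvalue and `g` commutes with `f`, then `f`
restricts to every generalized eigenspace of `g`, so each of these has even dimension. Hence every
real root of the characteristic polynomial of `g` has even multiplicity, that polynomial never
changes sign, and `det g ≥ 0`. For even `n ≥ 2` the polynomial `X ^ n - X + 1` is positive on `ℝ`,
so `det g = -1` is impossible.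
-/

section RealPolynomial

theorem exists_isRoot_of_odd_natDegree {p : ℝ[X]} (hp : Odd p.natDegree) : ∃ x, p.IsRoot x := by
  wlog hlc : 0 ≤ p.leadingCoeff generalizing p
  · obtain ⟨x, hx⟩ := this (p := -p) (by rwa [natDegree_neg])
      (by rw [leadingCoeff_neg]; exact neg_nonneg.2 (not_le.1 hlc).le)
    exact ⟨x, by simpa only [IsRoot.def, eval_neg, neg_eq_zero] using hx⟩
  by_contra! hroots
  have hpos : 0 < p.eval 0 :=
    zero_lt_eval_of_roots_lt_of_leadingCoeff_nonneg (fun y hy ↦ absurd hy (hroots y)) hlc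
  have hneg : 0 < (p.natDegree : ℤ).negOnePow * p.eval 0 :=
    zero_lt_negOnePow_mul_eval_of_lt_roots_of_leadingCoeff_nonneg
      (fun y hy ↦ absurd hy (hroots y)) hlc
  have hodd : (p.natDegree : ℤ).negOnePow = -1 := Int.negOnePow_odd _ (by exact_mod_cast hp)
  exact hpos.not_gt (by simpa [hodd] using hneg)

theorem eval_nonneg_of_even_rootMultiplicity {p : ℝ[X]} (hlc : 0 ≤ p.leadingCoeff)
    (hp : ∀ a, Even (p.rootMultiplicity a)) (x : ℝ) : 0 ≤ p.eval x := by
  obtain rfl | hp0 := eq_or_ne p 0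
  · exact eval_zero.ge
  obtain ⟨q, hq, -, hq_roots⟩ := p.exists_prod_multiset_X_sub_C_mul
  have hq0 : q ≠ 0 := right_ne_zero_of_mul (hq ▸ hp0)
  have hq_lc : q.leadingCoeff = p.leadingCoeff := by
    rw [← hq, leadingCoeff_monic_mul (monic_multisetProd_X_sub_C p.roots)]
  have hq_pos : 0 < q.eval x :=
    zero_lt_eval_of_roots_lt_of_leadingCoeff_nonneg
      (fun y hy ↦ absurd ((mem_roots hq0).2 hy) (hq_roots ▸ Multiset.notMem_zero y))
      (hq_lc ▸ hlc)
  have hprod : 0 ≤ ((p.roots.map fun a ↦ X - C a).prod).eval x := by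
    rw [Finset.prod_multiset_map_count, eval_prod]
    refine Finset.prod_nonneg fun a _ ↦ ?_
    rw [eval_pow, count_roots]
    exact (hp a).pow_nonneg _
  rw [← hq, eval_mul]
  exact mul_nonneg hprod hq_pos.le

end RealPolynomial

theorem hasEigenvalue_of_hasEigenvalue_restrict {R M : Type*} [CommRing R] [AddCommGroup M]
    [Module R M] {f : Module.End R M} {p : Submodule R M} (hf : ∀ x ∈ p, f x ∈ p) {μ : R}
    (h : Module.End.HasEigenvalue (f.restrict hf) μ) : f.HasEigenvalue μ := by
  rw [Module.End.hasEigenvalue_iff] at h ⊢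
  exact fun hbot ↦ h (Module.End.eigenspace_restrict_eq_bot hf (hbot ▸ disjoint_bot_left))

section RealEndomorphism

variable {V : Type*} [AddCommGroup V] [Module ℝ V] [FiniteDimensional ℝ V] {f g : Module.End ℝ V}

theorem even_finrank_of_forall_not_hasEigenvalue (hf : ∀ μ, ¬ f.HasEigenvalue μ) :
    Even (Module.finrank ℝ V) := by
  rw [← Nat.not_odd_iff_even, ← f.charpoly_natDegree]
  intro hodd
  obtain ⟨μ, hμ⟩ := exists_isRoot_of_odd_natDegree hodd
  exact hf μ ((f.hasEigenvalue_iff_isRoot_charpoly μ).2 hμ)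

theorem even_rootMultiplicity_charpoly_of_commute_of_forall_not_hasEigenvalue (hfg : Commute f g)
    (hf : ∀ μ, ¬ f.HasEigenvalue μ) (a : ℝ) : Even (g.charpoly.rootMultiplicity a) := by
  rw [← g.finrank_maxGenEigenspace_eq a]
  have hmaps := Module.End.mapsTo_maxGenEigenspace_of_comm hfg.symm a
  exact even_finrank_of_forall_not_hasEigenvalue (f := f.restrict hmaps)
    fun μ hμ ↦ hf μ (hasEigenvalue_of_hasEigenvalue_restrict hmaps hμ)

theorem det_nonneg_of_commute_of_forall_not_hasEigenvalue (hfg : Commute f g)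
    (hf : ∀ μ, ¬ f.HasEigenvalue μ) : 0 ≤ LinearMap.det g := by
  have heval : 0 ≤ (-g).charpoly.eval 0 :=
    eval_nonneg_of_even_rootMultiplicity ((-g).charpoly_monic.leadingCoeff ▸ zero_le_one)
      (even_rootMultiplicity_charpoly_of_commute_of_forall_not_hasEigenvalue hfg.neg_right hf) 0
  rwa [LinearMap.eval_charpoly, map_zero, zero_sub, neg_neg] at heval

end RealEndomorphism

theorem stmt3_general {ι R : Type*} [Fintype ι] [DecidableEq ι] [CommRing R] [Algebra R ℝ]
    {F G : Matrix ι ι R} (hF : ∀ x : ℝ, aeval x F.charpoly ≠ 0) (hFG : Commute F G) :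
    0 ≤ algebraMap R ℝ G.det := by
  set φ := algebraMap R ℝ
  have hcomm : Commute (F.map φ).toLin' (G.map φ).toLin' :=
    (hFG.map φ.mapMatrix).map Matrix.toLinAlgEquiv'
  have hno_eigenvalue (μ : ℝ) : ¬ Module.End.HasEigenvalue (F.map φ).toLin' μ := by
    rw [Module.End.hasEigenvalue_iff_isRoot_charpoly, Matrix.charpoly_toLin', Matrix.charpoly_map,
      IsRoot.def, eval_map_algebraMap]
    exact hF μ
  have hdet := det_nonneg_of_commute_of_forall_not_hasEigenvalue hcomm hno_eigenvalue
  rwa [LinearMap.det_toLin', ← RingHom.mapMatrix_apply, ← φ.map_det] at hdet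

theorem pow_sub_self_add_one_pos {R : Type*} [Ring R] [LinearOrder R] [IsStrictOrderedRing R]
    {n : ℕ} (hn : n ≠ 0) (hne : Even n) (x : R) : 0 < x ^ n - x + 1 := by
  obtain hx | hx := lt_or_ge x 1
  · rw [sub_add, sub_eq_add_neg, neg_sub]
    exact add_pos_of_nonneg_of_pos (hne.pow_nonneg x) (sub_pos.2 hx)
  · exact add_pos_of_nonneg_of_pos (sub_nonneg.2 (le_self_pow₀ hx hn)) one_pos

/-- If `n ≥ 2` is even and `F` is an integer `n × n` matrix with characteristic polynomial
`X^n - X + 1`, then no integer matrix `G` with `det G = -1` commutes with `F`. -/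
theorem stmt3 (n : ℕ) (hn : 2 ≤ n) (hne : Even n)
    (F : Matrix (Fin n) (Fin n) ℤ) (hF : F.charpoly = X ^ n - X + 1) :
    ¬ ∃ G : Matrix (Fin n) (Fin n) ℤ, G.det = -1 ∧ F * G = G * F := by
  rintro ⟨G, hG, hFG⟩
  have hroot (x : ℝ) : aeval x F.charpoly ≠ 0 := by
    simpa [hF] using (pow_sub_self_add_one_pos (by lia) hne x).ne'
  have hdet : 0 ≤ algebraMap ℤ ℝ G.det := stmt3_general hroot hFG
  norm_num [hG] at hdet
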